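/- arXiv:1809.05648 — 6 statements merged into one kernel-verified Lean document; each statement's English description precedes it below -/
import Mathlib

section
/- Let N ≥ 1 and t > 0. Then the class C[L₂] of 2-logconcave functions in ℝ^N equals the intersection, over all admissible functions F such that the Gauss kernel G(·,t) is F-concave in ℝ^N, of the classes C[F] of F-concave functions in ℝ^N. -/
open MeasureTheory Real

/-- `L_α(s) = -(-log s)^{1/α}` for `s > 0`, and `-∞` for `s ≤ 0`, as an `EReal`-valued
function. -/
noncomputable def Lfun (α : ℝ) (s : ℝ) : EReal :=
  if 0 < s then (((-((-Real.log s) ^ (1 / α))) : ℝ) : EReal) else ⊥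

/-- Concavity of an `(ℝ ∪ {-∞})`-valued function on the whole space, with the conventions
`-∞ + a = -∞` and `-∞ ≥ -∞`. -/
def ERealConcaveOn {E : Type*} [AddCommGroup E] [Module ℝ E] (f : E → EReal) : Prop :=
  ∀ x y : E, ∀ μ : ℝ, 0 ≤ μ → μ ≤ 1 →
    ((1 - μ : ℝ) : EReal) * f x + (μ : EReal) * f y ≤ f ((1 - μ) • x + μ • y)

/-- The Gauss kernel `G(x,t) = (4πt)^{-N/2} exp(-|x|²/(4t))`. -/
noncomputable def gauss (N : ℕ) (x : EuclideanSpace ℝ (Fin N)) (t : ℝ) : ℝ :=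
  (4 * Real.pi * t) ^ (-(N : ℝ) / 2) * Real.exp (-‖x‖ ^ 2 / (4 * t))

/-- The heat semigroup `[e^{tΔ}u₀](x) = ∫ G(x-y,t) u₀(y) dy` on `ℝ^N`. -/
noncomputable def heatSol (N : ℕ) (u₀ : EuclideanSpace ℝ (Fin N) → ℝ) (t : ℝ)
    (x : EuclideanSpace ℝ (Fin N)) : ℝ :=
  ∫ y, gauss N (x - y) t * u₀ y

/-- `u` is `α`-logconcave in `ℝ^N`: for all sufficiently small `κ > 0`, the function
`x ↦ L_α(κ u(x))` is concave as an `(ℝ ∪ {-∞})`-valued function. -/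
def AlphaLogConcave {N : ℕ} (α : ℝ) (u : EuclideanSpace ℝ (Fin N) → ℝ) : Prop :=
  ∃ κ₀ : ℝ, 0 < κ₀ ∧ ∀ κ : ℝ, 0 < κ → κ ≤ κ₀ →
    ERealConcaveOn (fun x => Lfun α (κ * u x))

/-- `F : [0,1] → ℝ ∪ {-∞}` is admissible: strictly increasing and continuous on `(0,1]`,
`F(0) = -∞`, and `F(s) ≠ -∞` for `s ∈ (0,1]`. -/
def Admissible (F : ℝ → EReal) : Prop :=
  StrictMonoOn F (Set.Ioc (0 : ℝ) 1) ∧ ContinuousOn F (Set.Ioc (0 : ℝ) 1) ∧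
    F 0 = ⊥ ∧ ∀ s : ℝ, 0 < s → s ≤ 1 → F s ≠ ⊥

/-- `u` is `F`-concave in `ℝ^N`: for all sufficiently small `κ > 0`, one has
`0 ≤ κ u ≤ 1` and `x ↦ F(κ u(x))` is concave as an `(ℝ ∪ {-∞})`-valued function. -/
def FConcave {N : ℕ} (F : ℝ → EReal) (u : EuclideanSpace ℝ (Fin N) → ℝ) : Prop :=
  ∃ κ₀ : ℝ, 0 < κ₀ ∧ ∀ κ : ℝ, 0 < κ → κ ≤ κ₀ →
    (∀ x, 0 ≤ κ * u x ∧ κ * u x ≤ 1) ∧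
    ∀ x y : EuclideanSpace ℝ (Fin N), ∀ μ : ℝ, 0 ≤ μ → μ ≤ 1 →
      ((1 - μ : ℝ) : EReal) * F (κ * u x) + (μ : EReal) * F (κ * u y) ≤
        F (κ * u ((1 - μ) • x + μ • y))

/-- The zero extension of a function `u` on `Ω` to all of `ℝ^N`. -/
noncomputable def zeroExt {N : ℕ} (Ω : Set (EuclideanSpace ℝ (Fin N)))
    (u : EuclideanSpace ℝ (Fin N) → ℝ) : EuclideanSpace ℝ (Fin N) → ℝ :=
  Ω.indicator u

/-- Concavity of an `(ℝ ∪ {-∞})`-valued function on a convex set `Ω`. -/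
def ERealConcaveOnSet {E : Type*} [AddCommGroup E] [Module ℝ E]
    (Ω : Set E) (f : E → EReal) : Prop :=
  ∀ x ∈ Ω, ∀ y ∈ Ω, ∀ μ : ℝ, 0 ≤ μ → μ ≤ 1 →
    ((1 - μ : ℝ) : EReal) * f x + (μ : EReal) * f y ≤ f ((1 - μ) • x + μ • y)

lemma Lfun_two_pos {s : ℝ} (hs : 0 < s) : Lfun 2 s = ((-√(-Real.log s) : ℝ) : EReal) := by
  unfold Lfun
  rw [if_pos hs, Real.sqrt_eq_rpow]

lemma Lfun_admissible : Admissible (Lfun 2) := by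
  refine ⟨?_, ?_, ?_, ?_⟩
  · intro a ha b hb hab
    rw [Lfun_two_pos ha.1, Lfun_two_pos hb.1, EReal.coe_lt_coe_iff, neg_lt_neg_iff]
    apply Real.sqrt_lt_sqrt
    · have := Real.log_nonpos hb.1.le hb.2
      linarith
    · have := Real.log_lt_log ha.1 hab
      linarith
  · have h : ContinuousOn (fun s : ℝ => ((-√(-Real.log s) : ℝ) : EReal)) (Set.Ioc (0 : ℝ) 1) := by
      apply continuous_coe_real_ereal.comp_continuousOn
      apply ContinuousOn.neg
      apply Real.continuous_sqrt.comp_continuousOn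
      apply ContinuousOn.neg
      exact Real.continuousOn_log.mono (fun s hs => by
        have := hs.1
        simp [this.ne'])
    exact h.congr (fun s hs => Lfun_two_pos hs.1)
  · simp [Lfun]
  · intro s hs _
    rw [Lfun_two_pos hs]
    exact EReal.coe_ne_bot _

lemma mink (c p q μ : ℝ) (hc : 0 ≤ c) (h0 : 0 ≤ μ) (h1 : μ ≤ 1) :
    √(c + ((1 - μ) * p + μ * q) ^ 2) ≤ (1 - μ) * √(c + p ^ 2) + μ * √(c + q ^ 2) := by
  have hA : √(c + p ^ 2) ^ 2 = c + p ^ 2 := Real.sq_sqrt (by positivity)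
  have hB : √(c + q ^ 2) ^ 2 = c + q ^ 2 := Real.sq_sqrt (by positivity)
  have hA0 := Real.sqrt_nonneg (c + p ^ 2)
  have hB0 := Real.sqrt_nonneg (c + q ^ 2)
  set A := √(c + p ^ 2)
  set B := √(c + q ^ 2)
  have hAB : c + p * q ≤ A * B := by
    apply le_of_sq_le_sq _ (by positivity)
    rw [mul_pow, hA, hB]
    nlinarith [mul_nonneg hc (sq_nonneg (p - q))]
  have h1' : 0 ≤ 1 - μ := by linarith
  apply Real.sqrt_le_iff.2 ⟨by positivity, ?_⟩
  have := mul_le_mul_of_nonneg_left hAB (mul_nonneg h0 h1')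
  have e1 : ((1 - μ) * A + μ * B) ^ 2
      = (1 - μ) ^ 2 * A ^ 2 + μ ^ 2 * B ^ 2 + 2 * (μ * (1 - μ) * (A * B)) := by ring
  rw [e1, hA, hB]
  nlinarith

lemma gauss_Lconcave (N : ℕ) (t : ℝ) (ht : 0 < t) :
    FConcave (Lfun 2) (fun x => gauss N x t) := by
  have hC : 0 < (4 * Real.pi * t) ^ (-(N : ℝ) / 2) := by positivity
  set C := (4 * Real.pi * t) ^ (-(N : ℝ) / 2) with hCdef
  have hg : ∀ x, gauss N x t = C * Real.exp (-‖x‖ ^ 2 / (4 * t)) := fun x => rfl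
  refine ⟨1 / C, by positivity, fun κ hκ hκ1 => ?_⟩
  have hκC : κ * C ≤ 1 := by rwa [le_div_iff₀ hC] at hκ1
  have hpos : ∀ x, 0 < κ * gauss N x t := fun x => by rw [hg]; positivity
  have hc : 0 ≤ -Real.log (κ * C) := by
    have := Real.log_nonpos (by positivity) hκC
    linarith
  have hst : (2 * √t) ^ 2 = 4 * t := by rw [mul_pow, Real.sq_sqrt ht.le]; norm_num
  have hst0 : 0 < 2 * √t := by positivity
  have hlog : ∀ x, -Real.log (κ * gauss N x t)
      = -Real.log (κ * C) + (‖x‖ / (2 * √t)) ^ 2 := fun x => by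
    rw [hg, ← mul_assoc, Real.log_mul (by positivity) (by positivity), Real.log_exp, div_pow, hst]
    ring
  refine ⟨fun x => ⟨(hpos x).le, ?_⟩, fun x y μ h0 h1 => ?_⟩
  · have h := hlog x
    have : Real.log (κ * gauss N x t) ≤ 0 := by nlinarith [sq_nonneg (‖x‖ / (2 * √t))]
    exact (Real.log_nonpos_iff (hpos x).le).1 this
  · simp only
    rw [Lfun_two_pos (hpos _), Lfun_two_pos (hpos _), Lfun_two_pos (hpos _)]
    rw [← EReal.coe_mul, ← EReal.coe_mul, ← EReal.coe_add, EReal.coe_le_coe_iff, hlog, hlog, hlog]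
    have h1' : 0 ≤ 1 - μ := by linarith
    have hn : ‖(1 - μ) • x + μ • y‖ / (2 * √t)
        ≤ (1 - μ) * (‖x‖ / (2 * √t)) + μ * (‖y‖ / (2 * √t)) := by
      have := norm_add_le ((1 - μ) • x) (μ • y)
      rw [norm_smul, norm_smul, Real.norm_of_nonneg h1', Real.norm_of_nonneg h0] at this
      calc _ ≤ ((1 - μ) * ‖x‖ + μ * ‖y‖) / (2 * √t) := by gcongr
        _ = _ := by ring
    have hm := mink (-Real.log (κ * C)) (‖x‖ / (2 * √t)) (‖y‖ / (2 * √t)) μ hc h0 h1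
    have : √(-Real.log (κ * C) + (‖(1 - μ) • x + μ • y‖ / (2 * √t)) ^ 2)
      ≤ √(-Real.log (κ * C) + ((1 - μ) * (‖x‖ / (2 * √t)) + μ * (‖y‖ / (2 * √t))) ^ 2) := by
      gcongr
    linarith

lemma concave_of_gauss (N : ℕ) (hN : 1 ≤ N) (t : ℝ) (ht : 0 < t)
    (u : EuclideanSpace ℝ (Fin N) → ℝ) (hu : FConcave (Lfun 2) u)
    (F : ℝ → EReal) (hF : Admissible F) (hG : FConcave F (fun x => gauss N x t)) :
    FConcave F u := by
  obtain ⟨κ₁, hκ₁, hu⟩ := hu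
  obtain ⟨κ₂, hκ₂, hG⟩ := hG
  obtain ⟨hG1, hG2⟩ := hG κ₂ hκ₂ le_rfl
  have hC : 0 < (4 * Real.pi * t) ^ (-(N : ℝ) / 2) := by positivity
  set C := (4 * Real.pi * t) ^ (-(N : ℝ) / 2) with hCdef
  have hg : ∀ x, gauss N x t = C * Real.exp (-‖x‖ ^ 2 / (4 * t)) := fun x => rfl
  have hst : (2 * √t) ^ 2 = 4 * t := by rw [mul_pow, Real.sq_sqrt ht.le]; norm_num
  let e : EuclideanSpace ℝ (Fin N) := EuclideanSpace.single ⟨0, hN⟩ (1 : ℝ)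
  have he : ‖e‖ = 1 := by simp [e]
  let P : ℝ → EuclideanSpace ℝ (Fin N) := fun a => (2 * √t * a) • e
  have hP : ∀ a, gauss N (P a) t = C * Real.exp (-a ^ 2) := fun a => by
    rw [hg]
    congr 2
    simp only [P]
    rw [norm_smul, he, mul_one, Real.norm_eq_abs, sq_abs, mul_pow, hst]
    field_simp
  have hD1 : κ₂ * C ≤ 1 := by
    have := (hG1 (P 0)).2
    simpa [hP] using this
  have hD0 : 0 < κ₂ * C := by positivity
  refine ⟨κ₂ * C * κ₁, by positivity, fun κ hκ hκ1 => ?_⟩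
  obtain ⟨l, rfl⟩ : ∃ l, κ = κ₂ * C * l := ⟨κ / (κ₂ * C), by field_simp⟩
  have hl : 0 < l := pos_of_mul_pos_right hκ hD0.le
  have hl1 : l ≤ κ₁ := le_of_mul_le_mul_left hκ1 hD0
  obtain ⟨hu1, hu2⟩ := hu l hl hl1
  have hb : ∀ x, 0 ≤ κ₂ * C * l * u x ∧ κ₂ * C * l * u x ≤ 1 := fun x => by
    rw [mul_assoc (κ₂ * C)]
    exact ⟨mul_nonneg hD0.le (hu1 x).1, mul_le_one₀ hD1 (hu1 x).1 (hu1 x).2⟩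
  refine ⟨hb, fun x y μ h0 h1 => ?_⟩
  rcases h0.eq_or_lt with rfl | h0'
  · simp
  rcases h1.eq_or_lt with rfl | h1'
  · simp
  have h1'' : 0 < 1 - μ := by linarith
  rcases (hu1 x).1.eq_or_lt with hx | hx
  · rw [mul_assoc (κ₂ * C) l (u x), ← hx, mul_zero, hF.2.2.1, EReal.coe_mul_bot_of_pos h1'',
      EReal.bot_add]
    exact bot_le
  rcases (hu1 y).1.eq_or_lt with hy | hy
  · rw [mul_assoc (κ₂ * C) l (u y), ← hy, mul_zero, hF.2.2.1, EReal.coe_mul_bot_of_pos h0',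
      EReal.add_bot]
    exact bot_le
  have key := hu2 x y μ h0 h1
  set z := (1 - μ) • x + μ • y with hz
  rw [Lfun_two_pos hx, Lfun_two_pos hy, ← EReal.coe_mul, ← EReal.coe_mul, ← EReal.coe_add] at key
  have hzpos : 0 < l * u z := by
    by_contra hcon
    rw [Lfun, if_neg hcon] at key
    exact EReal.coe_ne_bot _ (le_bot_iff.1 key)
  rw [Lfun_two_pos hzpos, EReal.coe_le_coe_iff] at key
  have hexp : ∀ w, 0 < l * u w → Real.exp (-√(-Real.log (l * u w)) ^ 2) = l * u w := fun w hw => by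
    have := Real.log_nonpos hw.le (hu1 w).2
    rw [Real.sq_sqrt (by linarith), neg_neg, Real.exp_log hw]
  have h := hG2 (P √(-Real.log (l * u x))) (P √(-Real.log (l * u y))) μ h0 h1
  have hPc : ∀ a b, (1 - μ) • P a + μ • P b = P ((1 - μ) * a + μ * b) := fun a b => by
    simp only [P, smul_smul, ← add_smul]
    congr 1
    ring
  simp only [hPc, hP] at h
  rw [hexp x hx, hexp y hy] at h
  simp only [← mul_assoc] at h ⊢
  refine h.trans ?_
  have hle : Real.exp (-((1 - μ) * √(-Real.log (l * u x)) + μ * √(-Real.log (l * u y))) ^ 2)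
      ≤ l * u z := by
    rw [← hexp z hzpos]
    apply Real.exp_le_exp.2
    apply neg_le_neg
    apply pow_le_pow_left₀ (Real.sqrt_nonneg _)
    linarith
  apply hF.1.monotoneOn
  · refine ⟨by positivity, ?_⟩
    exact mul_le_one₀ hD1 (Real.exp_pos _).le (hle.trans (hu1 z).2)
  · exact ⟨by rw [mul_assoc (κ₂ * C)]; positivity, (hb z).2⟩
  · rw [mul_assoc (κ₂ * C) l]
    gcongr

/-- Lemma 2.3, second part: `C[L₂]` equals the intersection of the classes
`C[F]` over all admissible `F` such that `G(·,t)` is `F`-concave. -/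
theorem two_logconcave_class_eq_iInter
    (N : ℕ) (hN : 1 ≤ N) (t : ℝ) (ht : 0 < t) :
    {u : EuclideanSpace ℝ (Fin N) → ℝ | FConcave (Lfun 2) u} =
      ⋂ F ∈ {F : ℝ → EReal | Admissible F ∧ FConcave F (fun x => gauss N x t)},
        {u : EuclideanSpace ℝ (Fin N) → ℝ | FConcave F u} := by
  apply Set.Subset.antisymm
  · intro u hu
    simp only [Set.mem_iInter]
    rintro F ⟨hF, hG⟩
    exact concave_of_gauss N hN t ht u hu F hF hG
  · intro u hu
    simp only [Set.mem_iInter] at hu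
    exact hu (Lfun 2) ⟨Lfun_admissible, gauss_Lconcave N t ht⟩
end

section
/- Let N ≥ 1 and 0 < α < 1, and define u : ℝ^N → ℝ by u(x) := exp(-|x|^α). Then the function x ↦ L_α(u(x)) = -|x| is concave on ℝ^N, but for every κ with 0 < κ < 1 the function x ↦ L_α(κ u(x)) = -(-log κ + |x|^α)^{1/α} is NOT concave on ℝ^N. Consequently, for 0 < α < 1, concavity of L_α(κu) for some κ > 0 does not imply concavity of L_α(κ'u) for all smaller κ' > 0. -/
open MeasureTheory Real

/-- Remark 2.1 (ii): For `0 < α < 1` and `u(x) = exp(-|x|^α)`, the function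
`L_α(u) = -|x|` is concave on `ℝ^N`, but for every `0 < κ < 1` the function
`L_α(κu) = -(-log κ + |x|^α)^{1/α}` is not concave on `ℝ^N`. -/
theorem alpha_logconcavity_fails_for_small_alpha
    (N : ℕ) (hN : 1 ≤ N) (α : ℝ) (hα₀ : 0 < α) (hα₁ : α < 1) :
    (∀ x : EuclideanSpace ℝ (Fin N),
        -(-Real.log (Real.exp (-‖x‖ ^ α))) ^ (1 / α) = -‖x‖) ∧
    ConcaveOn ℝ Set.univ (fun x : EuclideanSpace ℝ (Fin N) => -‖x‖) ∧
    ∀ κ : ℝ, 0 < κ → κ < 1 →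
      (∀ x : EuclideanSpace ℝ (Fin N),
          -(-Real.log (κ * Real.exp (-‖x‖ ^ α))) ^ (1 / α) =
            -(-Real.log κ + ‖x‖ ^ α) ^ (1 / α)) ∧
      ¬ ConcaveOn ℝ Set.univ
          (fun x : EuclideanSpace ℝ (Fin N) =>
            -(-Real.log κ + ‖x‖ ^ α) ^ (1 / α)) := by
  have hp : 1 ≤ 1 / α := by rw [le_div_iff₀ hα₀]; linarith
  refine ⟨?_, ?_, ?_⟩
  · intro x
    rw [Real.log_exp, neg_neg, ← Real.rpow_mul (norm_nonneg x), mul_one_div_cancel hα₀.ne',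
      Real.rpow_one]
  · exact (convexOn_norm (E := EuclideanSpace ℝ (Fin N)) convex_univ).neg
  · intro κ hκ hκ1
    refine ⟨?_, ?_⟩
    · intro x
      rw [Real.log_mul hκ.ne' (Real.exp_pos _).ne', Real.log_exp]
      congr 2
      ring
    · intro h
      have hc : 0 < -Real.log κ := neg_pos.mpr (Real.log_neg hκ hκ1)
      generalize -Real.log κ = c at h hc
      set e : EuclideanSpace ℝ (Fin N) := EuclideanSpace.single ⟨0, hN⟩ 1 with he
      have hen : ‖e‖ = 1 := by simp [he]
      have hA : 0 < c ^ (1 / α) / c := div_pos (Real.rpow_pos_of_pos hc _) hc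
      set A := c ^ (1 / α) / c with hAdef
      set M := (c + 1) ^ (1 / α) - c ^ (1 / α) with hM
      have key : ∀ t : ℝ, 0 < t → t < 1 → A * t ^ α ≤ M * t := by
        intro t ht ht1
        have h1 := h.2 (Set.mem_univ (0 : EuclideanSpace ℝ (Fin N))) (Set.mem_univ e)
          (sub_nonneg.mpr ht1.le) ht.le (by ring)
        simp only [smul_eq_mul, smul_zero, zero_add, norm_smul, hen, norm_zero, mul_one,
          Real.norm_eq_abs, abs_of_pos ht, Real.zero_rpow hα₀.ne', Real.one_rpow, add_zero] at h1
        have hs : 0 < t ^ α := Real.rpow_pos_of_pos ht _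
        have h2 : 1 + t ^ α / c ≤ (1 + t ^ α / c) ^ (1 / α) :=
          Real.self_le_rpow_of_one_le (by have := div_pos hs hc; linarith) hp
        have h3 : (c + t ^ α) ^ (1 / α) = c ^ (1 / α) * (1 + t ^ α / c) ^ (1 / α) := by
          rw [← Real.mul_rpow hc.le (by positivity)]
          congr 1
          field_simp
        have h4 : c ^ (1 / α) * (1 + t ^ α / c) ≤ (c + t ^ α) ^ (1 / α) := by
          rw [h3]
          exact mul_le_mul_of_nonneg_left h2 (Real.rpow_pos_of_pos hc _).le
        have h5 : c ^ (1 / α) * (1 + t ^ α / c) = c ^ (1 / α) + A * t ^ α := by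
          rw [hAdef]; ring
        rw [hM]
        nlinarith
      have hcont : Filter.Tendsto (fun t : ℝ => M * t ^ (1 - α)) (nhdsWithin 0 (Set.Ioi 0))
          (nhds 0) := by
        have h0 : ContinuousAt (fun t : ℝ => M * t ^ (1 - α)) 0 :=
          continuousAt_const.mul (Real.continuousAt_rpow_const _ _ (Or.inr (by linarith)))
        have h1 := h0.tendsto
        rw [Real.zero_rpow (by linarith), mul_zero] at h1
        exact h1.mono_left nhdsWithin_le_nhds
      have hev := (hcont.eventually (gt_mem_nhds hA)).and
        (Ioo_mem_nhdsGT (zero_lt_one (α := ℝ)))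
      obtain ⟨t, ht, ht0, ht1⟩ := hev.exists
      have h6 := key t ht0 ht1
      have h7 : t = t ^ (1 - α) * t ^ α := by
        rw [← Real.rpow_add ht0]; simp
      have hs : 0 < t ^ α := Real.rpow_pos_of_pos ht0 _
      have h8 : M * t = M * t ^ (1 - α) * t ^ α := by
        rw [mul_assoc, ← h7]
      have h9 := mul_lt_mul_of_pos_right ht hs
      linarith
end

section
/- Let 0 < α ≤ β, let Ω be a convex set in ℝ^N, and let u be a bounded nonnegative function on Ω. If u is β-logconcave in Ω, then u is α-logconcave in Ω. -/
open MeasureTheory Real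

theorem Lfun_mid (α β : ℝ) (hα : 0 < α) (hαβ : α ≤ β) (a b c μ : ℝ)
    (ha1 : a ≤ 1) (hb1 : b ≤ 1) (hc1 : c ≤ 1) (hμ : 0 < μ) (hμ1 : μ < 1)
    (h : ((1 - μ : ℝ) : EReal) * Lfun β a + (μ : EReal) * Lfun β b ≤ Lfun β c) :
    ((1 - μ : ℝ) : EReal) * Lfun α a + (μ : EReal) * Lfun α b ≤ Lfun α c := by
  have hμ' : 0 < 1 - μ := by linarith
  have hβ : 0 < β := by linarith
  by_cases ha : 0 < a
  swap
  · have : Lfun α a = ⊥ := by simp [Lfun, ha]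
    rw [this, EReal.coe_mul_bot_of_pos hμ', EReal.bot_add]
    exact bot_le
  by_cases hb : 0 < b
  swap
  · have : Lfun α b = ⊥ := by simp [Lfun, hb]
    rw [this, EReal.coe_mul_bot_of_pos hμ, EReal.add_bot]
    exact bot_le
  by_cases hc : 0 < c
  swap
  · exfalso
    unfold Lfun at h
    rw [if_pos ha, if_pos hb, if_neg hc, ← EReal.coe_mul, ← EReal.coe_mul, ← EReal.coe_add] at h
    exact EReal.coe_ne_bot _ (le_bot_iff.mp h)
  unfold Lfun at h ⊢
  rw [if_pos ha, if_pos hb, if_pos hc, ← EReal.coe_mul, ← EReal.coe_mul, ← EReal.coe_add,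
    EReal.coe_le_coe_iff] at h ⊢
  have hA : 0 ≤ -Real.log a := by linarith [Real.log_nonpos ha.le ha1]
  have hB : 0 ≤ -Real.log b := by linarith [Real.log_nonpos hb.le hb1]
  have hC : 0 ≤ -Real.log c := by linarith [Real.log_nonpos hc.le hc1]
  generalize -Real.log a = A at *
  generalize -Real.log b = B at *
  generalize -Real.log c = C at *
  have key : ∀ X : ℝ, 0 ≤ X → X ^ (1 / α) = (X ^ (1 / β)) ^ (β / α) := by
    intro X hX
    rw [← Real.rpow_mul hX]
    congr 1
    field_simp
  rw [key A hA, key B hB, key C hC]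
  have hp : 1 ≤ β / α := by rw [le_div_iff₀ hα]; linarith
  have hA' := Real.rpow_nonneg hA (1 / β)
  have hB' := Real.rpow_nonneg hB (1 / β)
  have hC' := Real.rpow_nonneg hC (1 / β)
  have h1 := (convexOn_rpow hp).2 (Set.mem_Ici.2 hA') (Set.mem_Ici.2 hB') hμ'.le hμ.le (by ring)
  have h2 := Real.rpow_le_rpow hC'
    (show C ^ (1 / β) ≤ (1 - μ) * A ^ (1 / β) + μ * B ^ (1 / β) by linarith)
    (show 0 ≤ β / α by linarith)
  simp only [smul_eq_mul] at h1
  linarith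

/-- If `0 < α ≤ β` and `u` is `β`-logconcave in a convex set `Ω`, then `u` is
`α`-logconcave in `Ω`. -/
theorem beta_logconcave_implies_alpha_logconcave
    (N : ℕ) (α β : ℝ) (hα : 0 < α) (hαβ : α ≤ β)
    (Ω : Set (EuclideanSpace ℝ (Fin N))) (hΩ : Convex ℝ Ω)
    (u : EuclideanSpace ℝ (Fin N) → ℝ)
    (h0 : ∀ x ∈ Ω, 0 ≤ u x) (hbd : ∃ M : ℝ, ∀ x ∈ Ω, u x ≤ M)
    (hβ : AlphaLogConcave β (zeroExt Ω u)) :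
    AlphaLogConcave α (zeroExt Ω u) := by
  obtain ⟨M, hM⟩ := hbd
  obtain ⟨κ₀, hκ₀, h⟩ := hβ
  have hM1 : 0 < |M| + 1 := by positivity
  refine ⟨min κ₀ (1 / (|M| + 1)), lt_min hκ₀ (by positivity), ?_⟩
  intro κ hκ hκle x y μ hμ hμ1
  have hle : ∀ z, κ * zeroExt Ω u z ≤ 1 := by
    intro z
    have h1 : zeroExt Ω u z ≤ |M| + 1 := by
      unfold zeroExt
      by_cases hz : z ∈ Ω
      · rw [Set.indicator_of_mem hz]
        linarith [hM z hz, le_abs_self M]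
      · rw [Set.indicator_of_notMem hz]
        exact hM1.le
    have h2 : κ * (|M| + 1) ≤ 1 := by
      rw [← le_div_iff₀ hM1]
      exact hκle.trans (min_le_right _ _)
    exact (mul_le_mul_of_nonneg_left h1 hκ.le).trans h2
  rcases hμ.eq_or_lt with rfl | hμ0
  · simp
  rcases hμ1.eq_or_lt with rfl | hμ2
  · simp
  exact Lfun_mid α β hα hαβ _ _ _ μ (hle _) (hle _) (hle _) hμ0 hμ2
    (h κ hκ (hκle.trans (min_le_left _ _)) x y μ hμ hμ1)
end

section
/- Let γ ∈ (0,1]. The function g_γ : (-∞,0) → ℝ defined by g_γ(s) := -(1/γ)(-s)^{(1-γ)/γ} + ((γ-1)/γ) s^{-1} + 1 is convex on (-∞,0) if and only if 1/2 ≤ γ ≤ 1. -/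
open MeasureTheory Real

/-- For `γ ∈ (0,1]`, the function
`s ↦ -(1/γ)(-s)^{(1-γ)/γ} + ((γ-1)/γ) s⁻¹ + 1` is convex on `(-∞,0)` iff `1/2 ≤ γ`. -/
theorem convexity_aux_iff (γ : ℝ) (h0 : 0 < γ) (h1 : γ ≤ 1) :
    ConvexOn ℝ (Set.Iio (0 : ℝ))
      (fun s : ℝ => -(1 / γ) * (-s) ^ ((1 - γ) / γ) + ((γ - 1) / γ) * s⁻¹ + 1) ↔
    1 / 2 ≤ γ := by
  have hp : (γ - 1) / γ = -((1 - γ) / γ) := by ring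
  have hp0 : 0 ≤ (1 - γ) / γ := div_nonneg (by linarith) h0.le
  have hg : 0 < 1 / γ := by positivity
  have hpg : (1 - γ) / γ = 1 / γ - 1 := by field_simp
  have hhalf : 1 / 2 ≤ γ ↔ (1 - γ) / γ ≤ 1 := by
    rw [div_le_one h0]; constructor <;> intro h <;> linarith
  rw [hp, hhalf]
  generalize (1 - γ) / γ = p at *
  generalize 1 / γ = a at *
  constructor
  · intro h
    by_contra hlt
    push Not at hlt
    have hc : (2:ℝ) ^ p < (1 + 3 ^ p) / 2 := by
      have := (strictConvexOn_rpow hlt).2 (show (1:ℝ) ∈ Set.Ici 0 by norm_num)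
        (show (3:ℝ) ∈ Set.Ici 0 by norm_num) (by norm_num)
        (show (0:ℝ) < 1 / 2 by norm_num) (show (0:ℝ) < 1 / 2 by norm_num) (by norm_num)
      norm_num at this
      linarith
    obtain ⟨c, hcdef⟩ : ∃ c : ℝ, c = (1 + 3 ^ p) / 2 - 2 ^ p := ⟨_, rfl⟩
    have hc0 : 0 < c := by linarith
    obtain ⟨x, hx⟩ : ∃ x : ℝ, x = 1 + p / c := ⟨_, rfl⟩
    have hx1 : 1 ≤ x := by
      have : 0 ≤ p / c := by positivity
      linarith
    have hcx : c * x = c + p := by rw [hx]; field_simp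
    have hx0 : 0 < x := by linarith
    have hxp : 1 ≤ x ^ p := Real.one_le_rpow hx1 hp0
    have key := h.2 (show -x ∈ Set.Iio (0:ℝ) by simpa using hx0)
      (show -(3 * x) ∈ Set.Iio (0:ℝ) by simpa using hx0)
      (show (0:ℝ) ≤ 1 / 2 by norm_num) (show (0:ℝ) ≤ 1 / 2 by norm_num) (by norm_num)
    simp only [smul_eq_mul] at key
    rw [show (1 / 2 * -x + 1 / 2 * -(3 * x) : ℝ) = -(2 * x) by ring] at key
    simp only [neg_neg] at key
    rw [Real.mul_rpow (by norm_num) hx0.le, Real.mul_rpow (by norm_num) hx0.le] at key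
    simp only [inv_neg, mul_inv] at key
    have h2 : a * (c * x ^ p) ≤ p * x⁻¹ / 6 := by
      rw [hcdef]; nlinarith [key]
    have h3 : c * 1 ≤ a * (c * x ^ p) := by
      have : c * 1 ≤ c * x ^ p := by gcongr
      have : 1 * (c * x ^ p) ≤ a * (c * x ^ p) := by
        gcongr
        linarith
      linarith
    have h4 : c * x ≤ p / 6 := by
      calc c * x ≤ p * x⁻¹ / 6 * x := by gcongr; linarith
        _ = p / 6 := by field_simp
    linarith
  · intro hle
    refine ⟨convex_Iio 0, ?_⟩
    intro x hx y hy u v hu hv huv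
    simp only [Set.mem_Iio] at hx hy
    have A := (Real.concaveOn_rpow hp0 hle).2 (show -x ∈ Set.Ici (0:ℝ) by simpa using hx.le)
      (show -y ∈ Set.Ici (0:ℝ) by simpa using hy.le) hu hv huv
    have B := (convexOn_zpow (𝕜 := ℝ) (-1)).2 (show -x ∈ Set.Ioi (0:ℝ) by simpa using hx)
      (show -y ∈ Set.Ioi (0:ℝ) by simpa using hy) hu hv huv
    simp only [smul_eq_mul, zpow_neg_one] at A B ⊢
    rw [show u * -x + v * -y = -(u * x + v * y) by ring] at A B
    simp only [inv_neg] at B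
    have A' := mul_le_mul_of_nonneg_left A hg.le
    have B' := mul_le_mul_of_nonneg_left B hp0
    linear_combination A' + B' - huv
end

section
/- Let p > 0 and α > 0. Then there exists δ ∈ (0,1) such that for all a, b ∈ (0,δ] and all μ ∈ [0,1], ((1-μ)a^p + μ b^p)^{1/p} ≥ exp( -[ (1-μ)(-log a)^{1/α} + μ(-log b)^{1/α} ]^α ). -/
open MeasureTheory Real

theorem convex_aux (p α : ℝ) (hp : 0 < p) (hα : 0 < α) :
    ConvexOn ℝ (Set.Ici ((1 / p) ^ (1 / α))) (fun x : ℝ => Real.exp (-(p * x ^ α))) := by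
  have hM : 0 < (1 / p) ^ (1 / α) := by positivity
  refine convexOn_of_hasDerivWithinAt2_nonneg (convex_Ici _)
    (f' := fun x => Real.exp (-(p * x ^ α)) * (-(p * (α * x ^ (α - 1)))))
    (f'' := fun x => Real.exp (-(p * x ^ α)) * (-(p * (α * x ^ (α - 1)))) *
      (-(p * (α * x ^ (α - 1)))) + Real.exp (-(p * x ^ α)) *
        (-(p * (α * ((α - 1) * x ^ (α - 1 - 1)))))) ?_ ?_ ?_ ?_
  · intro x hx
    have hx0 : 0 < x := lt_of_lt_of_le hM hx
    exact ((((Real.hasDerivAt_rpow_const (p := α)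
      (Or.inl hx0.ne')).const_mul p).neg).exp).continuousAt.continuousWithinAt
  · intro x hx
    rw [interior_Ici] at hx
    have hx0 : 0 < x := lt_trans hM hx
    exact ((((Real.hasDerivAt_rpow_const (p := α)
      (Or.inl hx0.ne')).const_mul p).neg).exp).hasDerivWithinAt
  · intro x hx
    rw [interior_Ici] at hx
    have hx0 : 0 < x := lt_trans hM hx
    have h1 := ((((Real.hasDerivAt_rpow_const (p := α)
      (Or.inl hx0.ne')).const_mul p).neg).exp)
    have h2 := (((Real.hasDerivAt_rpow_const (p := α - 1)
      (Or.inl hx0.ne')).const_mul α).const_mul p).neg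
    exact (h1.mul h2).hasDerivWithinAt
  · intro x hx
    rw [interior_Ici] at hx
    have hx0 : 0 < x := lt_trans hM hx
    have h3 : 1 / p ≤ x ^ α := by
      have := Real.rpow_le_rpow hM.le (le_of_lt hx) hα.le
      rwa [← Real.rpow_mul (by positivity), one_div_mul_cancel hα.ne', Real.rpow_one] at this
    have h4 : 1 ≤ p * x ^ α := by
      rw [div_le_iff₀ hp] at h3
      linarith
    have h5 : x ^ (α - 1) * x ^ (α - 1) = x ^ (α - 1 - 1) * x ^ α := by
      rw [← Real.rpow_add hx0, ← Real.rpow_add hx0]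
      congr 1
      ring
    have h6 : Real.exp (-(p * x ^ α)) * (-(p * (α * x ^ (α - 1)))) *
      (-(p * (α * x ^ (α - 1)))) + Real.exp (-(p * x ^ α)) *
        (-(p * (α * ((α - 1) * x ^ (α - 1 - 1))))) =
        Real.exp (-(p * x ^ α)) * (p * α * x ^ (α - 1 - 1)) * (α * (p * x ^ α) - (α - 1)) := by
      linear_combination (Real.exp (-(p * x ^ α)) * p * p * α * α) * h5
    simp only [h6]
    have h7 : 0 ≤ α * (p * x ^ α) - (α - 1) := by nlinarith
    positivity

/-- For `p > 0` and `α > 0` there is `δ ∈ (0,1)` such that for all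
`a, b ∈ (0,δ]` and `μ ∈ [0,1]`,
`((1-μ)a^p + μb^p)^{1/p} ≥ exp(-[(1-μ)(-log a)^{1/α} + μ(-log b)^{1/α}]^α)`. -/
theorem power_mean_ge_log_mean (p α : ℝ) (hp : 0 < p) (hα : 0 < α) :
    ∃ δ : ℝ, 0 < δ ∧ δ < 1 ∧ ∀ a b : ℝ, 0 < a → a ≤ δ → 0 < b → b ≤ δ →
      ∀ μ : ℝ, 0 ≤ μ → μ ≤ 1 →
        Real.exp (-((1 - μ) * (-Real.log a) ^ (1 / α) +
            μ * (-Real.log b) ^ (1 / α)) ^ α) ≤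
          ((1 - μ) * a ^ p + μ * b ^ p) ^ (1 / p) := by
  refine ⟨Real.exp (-(1 / p)), Real.exp_pos _, ?_, ?_⟩
  · rw [Real.exp_lt_one_iff]
    have : 0 < 1 / p := by positivity
    linarith
  intro a b ha haδ hb hbδ μ hμ0 hμ1
  have key : ∀ c : ℝ, 0 < c → c ≤ Real.exp (-(1 / p)) →
      (-Real.log c) ^ (1 / α) ∈ Set.Ici ((1 / p) ^ (1 / α)) ∧
      Real.exp (-(p * ((-Real.log c) ^ (1 / α)) ^ α)) = c ^ p := by
    intro c hc hcδ
    have h1 : 1 / p ≤ -Real.log c := by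
      have := Real.log_le_log hc hcδ
      rw [Real.log_exp] at this
      linarith
    have h0 : 0 < 1 / p := by positivity
    refine ⟨Real.rpow_le_rpow h0.le h1 (by positivity), ?_⟩
    rw [← Real.rpow_mul (by linarith), one_div_mul_cancel hα.ne', Real.rpow_one,
      Real.rpow_def_of_pos hc]
    congr 1
    ring
  obtain ⟨hxa, hea⟩ := key a ha haδ
  obtain ⟨hxb, heb⟩ := key b hb hbδ
  have hc := (convex_aux p α hp hα).2 hxa hxb (sub_nonneg.2 hμ1) hμ0 (by ring)
  simp only [smul_eq_mul, hea, heb] at hc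
  have h := Real.rpow_le_rpow (Real.exp_pos _).le hc (by positivity : 0 ≤ 1 / p)
  refine le_trans (le_of_eq ?_) h
  rw [← Real.exp_mul]
  congr 1
  field_simp
end

section
/- Let α ≥ 1 and let u be a bounded nonnegative function on a convex set Ω ⊂ ℝ^N with zero extension U. If there exists a single κ₀ > 0 with 0 ≤ κ₀U ≤ 1 such that x ↦ L_α(κ₀U(x)) is concave on ℝ^N, then for every κ ∈ (0,κ₀] the function x ↦ L_α(κU(x)) is concave on ℝ^N; that is, for α ≥ 1, weak α-logconcavity is equivalent to α-logconcavity. -/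
open MeasureTheory Real

lemma scale_aux (α : ℝ) (hα : 1 ≤ α) (t a d : ℝ) (ht : 0 ≤ t) (ha : 0 ≤ a) (hd : 0 ≤ d) :
    ((t * a ^ (1 / α)) ^ α + (t * d ^ (1 / α)) ^ α) ^ (1 / α) = t * (a + d) ^ (1 / α) := by
  have hα0 : α ≠ 0 := by linarith
  have e : ∀ w : ℝ, 0 ≤ w → (w ^ (1 / α)) ^ α = w := fun w hw => by
    rw [← Real.rpow_mul hw, one_div_mul_cancel hα0, Real.rpow_one]
  have e' : ∀ w : ℝ, 0 ≤ w → (w ^ α) ^ (1 / α) = w := fun w hw => by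
    rw [← Real.rpow_mul hw, mul_one_div_cancel hα0, Real.rpow_one]
  rw [Real.mul_rpow ht (by positivity), Real.mul_rpow ht (by positivity), e a ha, e d hd,
    ← mul_add, Real.mul_rpow (by positivity) (by positivity), e' t ht]

lemma mink_aux (α : ℝ) (hα : 1 ≤ α) (μ a b c d : ℝ) (h0 : 0 ≤ μ) (h1 : μ ≤ 1)
    (ha : 0 ≤ a) (hb : 0 ≤ b) (hc : 0 ≤ c) (hd : 0 ≤ d)
    (h : c ^ (1 / α) ≤ (1 - μ) * a ^ (1 / α) + μ * b ^ (1 / α)) :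
    (c + d) ^ (1 / α) ≤ (1 - μ) * (a + d) ^ (1 / α) + μ * (b + d) ^ (1 / α) := by
  have h1' : 0 ≤ 1 - μ := by linarith
  have hA : 0 ≤ a ^ (1 / α) := by positivity
  have hB : 0 ≤ b ^ (1 / α) := by positivity
  have hC : 0 ≤ c ^ (1 / α) := by positivity
  have hD : 0 ≤ d ^ (1 / α) := by positivity
  have M := Real.Lp_add_le_of_nonneg (Finset.univ : Finset (Fin 2)) (p := α)
    (f := ![(1 - μ) * a ^ (1 / α), (1 - μ) * d ^ (1 / α)])
    (g := ![μ * b ^ (1 / α), μ * d ^ (1 / α)]) hα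
    (by intro i _; fin_cases i <;> simp <;> positivity)
    (by intro i _; fin_cases i <;> simp <;> positivity)
  simp only [Fin.sum_univ_two, Matrix.cons_val_zero, Matrix.cons_val_one] at M
  rw [scale_aux α hα _ a d h1' ha hd, scale_aux α hα _ b d h0 hb hd] at M
  refine le_trans ?_ M
  have k := scale_aux α hα 1 c d zero_le_one hc hd
  simp only [one_mul] at k
  rw [← k]
  have e : (1 - μ) * d ^ (1 / α) + μ * d ^ (1 / α) = d ^ (1 / α) := by ring
  rw [e]
  have : 0 ≤ α := by linarith
  gcongr

/-- Remark 2.1 (i): For `α ≥ 1`, weak `α`-logconcavity implies (and hence is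
equivalent to) `α`-logconcavity: if `L_α(κ₀ U)` is concave for a single `κ₀ > 0` with
`0 ≤ κ₀ U ≤ 1`, then `L_α(κ U)` is concave for every `κ ∈ (0, κ₀]`. -/
theorem weak_alpha_logconcave_iff_alpha_logconcave
    (N : ℕ) (α : ℝ) (hα : 1 ≤ α)
    (Ω : Set (EuclideanSpace ℝ (Fin N))) (hΩ : Convex ℝ Ω)
    (u : EuclideanSpace ℝ (Fin N) → ℝ)
    (h0 : ∀ x ∈ Ω, 0 ≤ u x) (hbd : ∃ M : ℝ, ∀ x ∈ Ω, u x ≤ M)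
    (κ₀ : ℝ) (hκ₀ : 0 < κ₀)
    (hrange : ∀ x, 0 ≤ κ₀ * zeroExt Ω u x ∧ κ₀ * zeroExt Ω u x ≤ 1)
    (hconc : ERealConcaveOn (fun x => Lfun α (κ₀ * zeroExt Ω u x))) :
    ∀ κ : ℝ, 0 < κ → κ ≤ κ₀ →
      ERealConcaveOn (fun x => Lfun α (κ * zeroExt Ω u x)) := by
  intro κ hκ hle x y μ h0μ h1μ
  rcases h0μ.eq_or_lt with rfl | hμ
  · simp
  rcases h1μ.eq_or_lt with rfl | hμ1
  · simp
  have hc := hconc x y μ h0μ h1μ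
  have hm : 0 < 1 - μ := by linarith
  have rx := hrange x
  have ry := hrange y
  have rz := hrange ((1 - μ) • x + μ • y)
  simp only [Lfun] at hc ⊢
  generalize zeroExt Ω u ((1 - μ) • x + μ • y) = r at *
  generalize zeroExt Ω u x = p at *
  generalize zeroExt Ω u y = q at *
  simp only [mul_pos_iff_of_pos_left hκ, mul_pos_iff_of_pos_left hκ₀] at hc ⊢
  by_cases hp : 0 < p
  swap
  · rw [if_neg hp, EReal.coe_mul_bot_of_pos hm, EReal.bot_add]
    exact bot_le
  by_cases hq : 0 < q
  swap
  · rw [if_neg hq, EReal.coe_mul_bot_of_pos hμ, EReal.add_bot]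
    exact bot_le
  by_cases hr : 0 < r
  swap
  · rw [if_pos hp, if_pos hq, if_neg hr, ← EReal.coe_mul, ← EReal.coe_mul, ← EReal.coe_add] at hc
    exact absurd (le_bot_iff.mp hc) (EReal.coe_ne_bot _)
  rw [if_pos hp, if_pos hq, if_pos hr, ← EReal.coe_mul, ← EReal.coe_mul, ← EReal.coe_add,
    EReal.coe_le_coe_iff] at hc ⊢
  have key : ∀ w : ℝ, 0 < w → -Real.log (κ * w) = -Real.log (κ₀ * w) + Real.log (κ₀ / κ) := by
    intro w hw
    rw [Real.log_mul hκ.ne' hw.ne', Real.log_mul hκ₀.ne' hw.ne', Real.log_div hκ₀.ne' hκ.ne']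
    ring
  rw [key p hp, key q hq, key r hr]
  have nn : ∀ w : ℝ, 0 ≤ w ∧ w ≤ 1 → 0 ≤ -Real.log w := fun w hw => by
    have := Real.log_nonpos hw.1 hw.2
    linarith
  have := mink_aux α hα μ _ _ _ (Real.log (κ₀ / κ)) h0μ h1μ (nn _ rx) (nn _ ry) (nn _ rz)
    (Real.log_nonneg ((one_le_div hκ).mpr hle)) (by linarith)
  linarith
end
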